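/- arXiv:math/0011060 — 2 statements merged into one kernel-verified Lean document; each statement's English description precedes it below -/
import Mathlib

section
/- With A, i < j, a_{ij} ≠ 0 and B as in the column-exchange construction, let C be the skew-symmetric matrix obtained from B by multiplying rows k and columns k by −1 for all i ≤ k < j. Then for every subset S of {1,…,n}, the Pfaffian of the principal minor of C on S satisfies Pf(C_S) = Pf(A_{S Δ {i,j}})/a_{ij}. -/
/-- The Pfaffian of an `N × N` matrix (intended for skew-symmetric matrices):
`Pf(A) = ∑_{σ ∈ S'_N} sign(σ) ∏_{k=1}^{N/2} a_{σ(2k-1) σ(2k)}`, where `S'_N` is the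
set of permutations `σ` of `{0, …, N-1}` such that `σ(2k)` is minimal among
`σ(2k), σ(2k+1), …, σ(N-1)` for each `k`.  It is `0` for odd `N` and `1` for `N = 0`. -/
noncomputable def pfaffian {N : ℕ} (A : Matrix (Fin N) (Fin N) ℝ) : ℝ :=
  if h : 2 ∣ N then
    ∑ σ ∈ Finset.univ.filter
        (fun σ : Equiv.Perm (Fin N) =>
          ∀ p q : Fin N, 2 ∣ (p : ℕ) → p ≤ q → σ p ≤ σ q),
      ((Equiv.Perm.sign σ : ℤ) : ℝ) *
        ∏ k : Fin (N / 2),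
          A (σ ⟨2 * (k : ℕ), by have := k.2; omega⟩)
            (σ ⟨2 * (k : ℕ) + 1, by have := k.2; omega⟩)
  else 0

/-- The Pfaffian of the principal minor of `A` indexed by the subset `S`,
with rows and columns of the minor taken in increasing order of index. -/
noncomputable def pfMinor {n : ℕ} (A : Matrix (Fin n) (Fin n) ℝ) (S : Finset (Fin n)) : ℝ :=
  pfaffian (Matrix.of fun p q : Fin S.card =>
    A ((S.orderIsoOfFin rfl p : S) : Fin n) ((S.orderIsoOfFin rfl q : S) : Fin n))


/-- The compound matrix `(A, I_n)` after swapping columns `i, j` of `A` with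
columns `i, j` of the identity: its left block. -/
def swapLeft {n : ℕ} (A : Matrix (Fin n) (Fin n) ℝ) (i j : Fin n) :
    Matrix (Fin n) (Fin n) ℝ :=
  Matrix.of fun r c => if c = i ∨ c = j then (if r = c then 1 else 0) else A r c

/-- The compound matrix `(A, I_n)` after swapping columns `i, j` of `A` with
columns `i, j` of the identity: its right block. -/
def swapRight {n : ℕ} (A : Matrix (Fin n) (Fin n) ℝ) (i j : Fin n) :
    Matrix (Fin n) (Fin n) ℝ :=
  Matrix.of fun r c => if c = i ∨ c = j then A r c else (if r = c then 1 else 0)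

/-- The sign `ρ_k`, equal to `−1` for `i ≤ k < j` and `+1` otherwise. -/
noncomputable def rhoSign {n : ℕ} (i j k : Fin n) : ℝ := if i ≤ k ∧ k < j then -1 else 1

section Wick

open CliffordAlgebra

variable {V : Type} [AddCommGroup V] [Module ℝ V]

/-- The exterior algebra, as a Clifford algebra of the zero form. -/
abbrev WAlg (V : Type) [AddCommGroup V] [Module ℝ V] : Type :=
  CliffordAlgebra (0 : QuadraticForm ℝ V)

/-- Generators of the exterior algebra. -/
noncomputable abbrev gen (v : V) : WAlg V := CliffordAlgebra.ι (0 : QuadraticForm ℝ V) v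

/-- Contraction. -/
noncomputable abbrev ctr (d : Module.Dual ℝ V) (x : WAlg V) : WAlg V :=
  CliffordAlgebra.contractLeft d x

theorem wick_proof (b : LinearMap.BilinForm ℝ V) (h : ∀ x, b x x = 0) :
    LinearMap.BilinMap.toQuadraticMap (-b) = (0 : QuadraticForm ℝ V) - 0 := by
  ext x
  simp [h]

/-- The Pfaffian functional on the exterior algebra. -/
noncomputable def wick (b : LinearMap.BilinForm ℝ V) (h : ∀ x, b x x = 0) :
    WAlg V →ₗ[ℝ] ℝ :=
  (ExteriorAlgebra.algebraMapInv (R := ℝ) (M := V)).toLinearMap ∘ₗ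
    changeForm (wick_proof b h)

theorem wick_one (b : LinearMap.BilinForm ℝ V) (h : ∀ x, b x x = 0) : wick b h 1 = 1 := by
  simp only [wick, LinearMap.comp_apply, changeForm_one]
  exact map_one (ExteriorAlgebra.algebraMapInv (R := ℝ) (M := V))

theorem wick_gen_mul (b : LinearMap.BilinForm ℝ V) (h : ∀ x, b x x = 0) (m : V) (x : WAlg V) :
    wick b h (gen m * x) = wick b h (ctr (b m) x) := by
  have h0 : (ExteriorAlgebra.algebraMapInv (R := ℝ) (M := V)) (gen m) = 0 := by
    have := ExteriorAlgebra.lift_ι_apply ℝ (A := ℝ) (0 : V →ₗ[ℝ] ℝ) (fun _ => by simp) m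
    simpa [ExteriorAlgebra.algebraMapInv] using this
  simp only [wick, LinearMap.comp_apply, changeForm_ι_mul, ctr, changeForm_contractLeft,
    AlgHom.toLinearMap_apply]
  refine (map_sub (ExteriorAlgebra.algebraMapInv (R := ℝ) (M := V)) _ _).trans ?_
  refine (congrArg (fun t => t - _)
    ((map_mul (ExteriorAlgebra.algebraMapInv (R := ℝ) (M := V)) _ _).trans
      (congrArg (fun t => t * _) h0))).trans ?_
  rw [LinearMap.neg_apply, map_neg, LinearMap.neg_apply]
  refine (congrArg (fun t => _ - t)
    (map_neg (ExteriorAlgebra.algebraMapInv (R := ℝ) (M := V)) _)).trans ?_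
  ring

theorem ctr_gen_mul (d : Module.Dual ℝ V) (a : V) (x : WAlg V) :
    ctr d (gen a * x) = d a • x - gen a * ctr d x := contractLeft_ι_mul _ _ _

theorem gen_sq (m : V) : gen m * gen m = 0 := by
  simpa using ι_sq_scalar (0 : QuadraticForm ℝ V) m

theorem gen_swap (m m' : V) : gen m * gen m' = - (gen m' * gen m) := by
  have := ExteriorAlgebra.ι_add_mul_swap (R := ℝ) m m'
  exact eq_neg_of_add_eq_zero_left this

/-- Uniqueness of functionals satisfying the Wick recursion. -/
theorem wick_unique (G : WAlg V →ₗ[ℝ] ℝ) (θ : V → Module.Dual ℝ V) (h1 : G 1 = 0)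
    (hm : ∀ m x, G (gen m * x) = G (ctr (θ m) x)) (x : WAlg V) : G x = 0 := by
  have key : ∀ x : WAlg V, ∀ ds : List (Module.Dual ℝ V),
      G (ds.foldl (fun y d => ctr d y) x) = 0 := by
    intro x
    induction x using CliffordAlgebra.left_induction with
    | algebraMap r =>
      intro ds
      have hz : ∀ ds : List (Module.Dual ℝ V),
          ds.foldl (fun y d => ctr d y) (0 : WAlg V) = 0 := by
        intro ds
        induction ds with
        | nil => rfl
        | cons d ds ih => simpa [ctr] using ih
      cases ds with
      | nil => simp [Algebra.algebraMap_eq_smul_one, h1]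
      | cons d ds => simp [ctr] at hz ⊢; simp [hz]
    | add x y hx hy =>
      intro ds
      have hz : ∀ (ds : List (Module.Dual ℝ V)) (x y : WAlg V),
          ds.foldl (fun y d => ctr d y) (x + y) = ds.foldl (fun y d => ctr d y) x
           + ds.foldl (fun y d => ctr d y) y := by
        intro ds
        induction ds with
        | nil => intros; rfl
        | cons d ds ih => intro x y; simp only [List.foldl_cons, ctr, map_add]; exact ih _ _
      rw [hz, map_add, hx, hy, add_zero]
    | ι_mul x m hx =>
      intro ds
      have hz : ∀ (ds : List (Module.Dual ℝ V)) (r : ℝ) (x y : WAlg V),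
          ds.foldl (fun y d => ctr d y) (r • x - y) = r • ds.foldl (fun y d => ctr d y) x
           - ds.foldl (fun y d => ctr d y) y := by
        intro ds
        induction ds with
        | nil => intros; rfl
        | cons d ds ih =>
          intro r x y
          simp only [List.foldl_cons, ctr, map_sub, map_smul]; exact ih _ _ _
      induction ds generalizing x with
      | nil =>
        have := hx [θ m]
        simpa [hm m x] using this
      | cons d ds ih =>
        rw [List.foldl_cons]
        change G (ds.foldl (fun y d => ctr d y) (ctr d (gen m * x))) = 0
        rw [ctr_gen_mul, hz, map_sub, map_smul, hx, ih]
        · simp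
        · intro ds'
          exact hx (d :: ds')
  exact key x []

theorem schur_aux (b b' : LinearMap.BilinForm ℝ V) (h : ∀ x, b x x = 0) (h' : ∀ x, b' x x = 0)
    (i j : V) (ha : b i j ≠ 0)
    (hb : ∀ m, b' m = b m + (b i j)⁻¹ • (b m i • b j - b m j • b i)) (x : WAlg V) :
    wick b h (gen i * (gen j * x)) = b i j * wick b' h' x := by
  have hji : b j i = - b i j := by
    have := h (i + j)
    simp [h] at this
    linarith
  have exp : ∀ m x, wick b h (gen m * (gen i * (gen j * x))) =
      b m i * wick b h (gen j * x) - b m j * wick b h (gen i * x)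
        + wick b h (gen i * (gen j * ctr (b m) x)) := by
    intro m x
    rw [wick_gen_mul, ctr_gen_mul, ctr_gen_mul]
    simp only [mul_sub, map_sub, map_smul, mul_smul_comm, smul_eq_mul]
    ring
  have e1 : ∀ x, wick b h (gen i * (gen j * ctr (b j) x)) = b i j * wick b h (gen j * x) := by
    intro x
    have := exp j x
    rw [← mul_assoc (gen i), gen_swap i j, neg_mul, mul_neg, ← mul_assoc, ← mul_assoc,
      gen_sq, zero_mul, zero_mul, neg_zero, map_zero, h, hji] at this
    linarith
  have e2 : ∀ x, wick b h (gen i * (gen j * ctr (b i) x)) = b i j * wick b h (gen i * x) := by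
    intro x
    have := exp i x
    rw [← mul_assoc, gen_sq, zero_mul, map_zero, h] at this
    linarith
  let G : WAlg V →ₗ[ℝ] ℝ :=
    wick b h ∘ₗ LinearMap.mulLeft ℝ (gen i) ∘ₗ LinearMap.mulLeft ℝ (gen j) - b i j • wick b' h'
  have hG : ∀ x, G x = wick b h (gen i * (gen j * x)) - b i j * wick b' h' x := fun x => by
    simp [G]
  have := wick_unique G (fun m => b' m) ?_ ?_ x
  · rw [hG] at this; linarith
  · rw [hG, wick_one, wick_gen_mul, ctr_gen_mul]
    simp [ctr, wick_one]
  · intro m x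
    rw [hG, hG, wick_gen_mul b' h']
    have hsw : gen i * (gen j * (gen m * x)) = gen m * (gen i * (gen j * x)) := by
      rw [← mul_assoc (gen j), gen_swap j m, neg_mul, mul_neg, mul_assoc, ← mul_assoc (gen i),
        gen_swap i m, neg_mul, neg_neg, mul_assoc]
    have hc : ctr (b' m) x = ctr (b m) x + (b i j)⁻¹ • (b m i • ctr (b j) x - b m j • ctr (b i) x) := by
      rw [hb]; simp [ctr]
    rw [hsw, exp, hc]
    simp only [mul_add, mul_sub, mul_smul_comm, map_add, map_smul, map_sub, smul_eq_mul, e1, e2]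
    have e3 : wick b h (gen i * (gen j * ctr (b m) x)) = wick b h (gen i * (gen j * ctr (b m) x)) := rfl
    field_simp
    ring

theorem ctr_ofFn (d : Module.Dual ℝ V) : ∀ (N : ℕ) (w : Fin (N + 1) → V),
    ctr d (List.ofFn fun k => gen (w k)).prod =
      ∑ k : Fin (N + 1), ((-1 : ℝ) ^ (k : ℕ) * d (w k)) •
        (List.ofFn fun p => gen (w (k.succAbove p))).prod := by
  intro N
  induction N with
  | zero => intro w; simp [ctr, Algebra.algebraMap_eq_smul_one]
  | succ N ih =>
    intro w
    rw [Fin.sum_univ_succ, List.ofFn_succ, List.prod_cons, ctr_gen_mul, ih]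
    simp only [Fin.val_zero, pow_zero, one_mul, Fin.succAbove_zero]
    rw [sub_eq_add_neg, Finset.mul_sum (R := WAlg V), ← Finset.sum_neg_distrib]
    congr 1
    refine Finset.sum_congr rfl fun k _ => ?_
    rw [List.ofFn_succ (n := N) (f := fun p => gen (w (k.succ.succAbove p)))]
    simp only [Fin.succ_succAbove_zero, Fin.succ_succAbove_succ, List.prod_cons, Fin.val_succ,
      mul_smul_comm, pow_succ]
    rw [← neg_smul]; congr 1; ring

end Wick
section PfRec

/-- Insert the pair `(0, k+1)` in front of a permutation. -/
noncomputable def insPerm {N : ℕ} (k : Fin (N + 1)) (σ : Equiv.Perm (Fin N)) :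
    Equiv.Perm (Fin (N + 2)) :=
  Equiv.Perm.decomposeFin.symm (0, k.cycleRange.symm * Equiv.Perm.decomposeFin.symm (0, σ))

theorem insPerm_zero {N : ℕ} (k : Fin (N + 1)) (σ : Equiv.Perm (Fin N)) :
    insPerm k σ 0 = 0 := by
  simp [insPerm]

theorem insPerm_one {N : ℕ} (k : Fin (N + 1)) (σ : Equiv.Perm (Fin N)) :
    insPerm k σ (Fin.succ 0) = k.succ := by
  rw [insPerm, Equiv.Perm.decomposeFin_symm_apply_succ]
  simp

theorem insPerm_succ {N : ℕ} (k : Fin (N + 1)) (σ : Equiv.Perm (Fin N)) (p : Fin N) :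
    insPerm k σ p.succ.succ = (k.succAbove (σ p)).succ := by
  rw [insPerm, Equiv.Perm.decomposeFin_symm_apply_succ]
  simp

theorem insPerm_sign {N : ℕ} (k : Fin (N + 1)) (σ : Equiv.Perm (Fin N)) :
    (((Equiv.Perm.sign (insPerm k σ) : ℤˣ) : ℤ) : ℝ) =
      (-1) ^ (k : ℕ) * ((Equiv.Perm.sign σ : ℤ) : ℝ) := by
  rw [insPerm, Equiv.Perm.decomposeFin.symm_sign, if_pos rfl, Equiv.Perm.sign_mul,
    Equiv.Perm.decomposeFin.symm_sign, if_pos rfl, Equiv.Perm.sign_symm, Fin.sign_cycleRange]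
  simp

theorem fix_zero {N : ℕ} (σ : Equiv.Perm (Fin (N + 1))) (h : σ 0 = 0) :
    ∃ τ : Equiv.Perm (Fin N), Equiv.Perm.decomposeFin.symm (0, τ) = σ := by
  have h1 := Equiv.Perm.decomposeFin.symm_apply_apply σ
  have h2 : (Equiv.Perm.decomposeFin σ).1 = 0 := by
    rw [← Equiv.Perm.decomposeFin_symm_apply_zero (Equiv.Perm.decomposeFin σ).1
      (Equiv.Perm.decomposeFin σ).2, Prod.mk.eta, h1, h]
  refine ⟨(Equiv.Perm.decomposeFin σ).2, ?_⟩
  rw [← h2, Prod.mk.eta, h1]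

theorem insPerm_surj {N : ℕ} (σ : Equiv.Perm (Fin (N + 2))) (h : σ 0 = 0) :
    ∃ k τ, insPerm k τ = σ := by
  obtain ⟨τ, rfl⟩ := fix_zero σ h
  obtain ⟨ρ, hρ⟩ := fix_zero ((τ 0).cycleRange * τ) (by simp)
  refine ⟨τ 0, ρ, ?_⟩
  rw [insPerm, hρ]
  congr 2
  ext x
  simp

theorem insPerm_inj {N : ℕ} {k k' : Fin (N + 1)} {σ σ' : Equiv.Perm (Fin N)}
    (h : insPerm k σ = insPerm k' σ') : k = k' ∧ σ = σ' := by
  have h1 : k = k' := by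
    have := congrArg (fun τ => τ (Fin.succ 0)) h
    simpa only [insPerm_one, Fin.succ_inj] using this
  subst h1
  refine ⟨rfl, Equiv.ext fun p => ?_⟩
  have := congrArg (fun τ => τ p.succ.succ) h
  simpa only [insPerm_succ, Fin.succ_inj, Fin.succAbove_right_inj] using this

theorem insPerm_mem {N : ℕ} (k : Fin (N + 1)) (σ : Equiv.Perm (Fin N)) :
    (∀ p q : Fin (N + 2), 2 ∣ (p : ℕ) → p ≤ q → insPerm k σ p ≤ insPerm k σ q) ↔
      (∀ p q : Fin N, 2 ∣ (p : ℕ) → p ≤ q → σ p ≤ σ q) := by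
  constructor
  · intro h p q hp hpq
    have := h p.succ.succ q.succ.succ (by simp only [Fin.val_succ]; omega)
      (by simpa only [Fin.succ_le_succ_iff] using hpq)
    simpa only [insPerm_succ, Fin.succ_le_succ_iff, Fin.succAbove_le_succAbove_iff] using this
  · intro h p q hp hpq
    induction p using Fin.cases with
    | zero => rw [insPerm_zero]; exact Fin.zero_le _
    | succ p =>
      induction p using Fin.cases with
      | zero => simp at hp
      | succ p =>
        induction q using Fin.cases with
        | zero => exact absurd (Fin.le_def.1 hpq) (by simp)
        | succ q =>
          induction q using Fin.cases with
          | zero => exact absurd (Fin.le_def.1 hpq) (by simp)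
          | succ q =>
            rw [insPerm_succ, insPerm_succ, Fin.succ_le_succ_iff, Fin.succAbove_le_succAbove_iff]
            refine h p q ?_ ?_
            · simp only [Fin.val_succ] at hp; omega
            · simpa only [Fin.succ_le_succ_iff] using hpq

theorem prod_half_succ {N : ℕ} (A : Matrix (Fin (N + 2)) (Fin (N + 2)) ℝ)
    (σ : Equiv.Perm (Fin (N + 2))) :
    (∏ k : Fin ((N + 2) / 2),
          A (σ ⟨2 * (k : ℕ), by have := k.2; omega⟩)
            (σ ⟨2 * (k : ℕ) + 1, by have := k.2; omega⟩)) =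
    A (σ 0) (σ (Fin.succ 0)) * ∏ k : Fin (N / 2),
          A (σ (Fin.succ (Fin.succ ⟨2 * (k : ℕ), by have := k.2; omega⟩)))
            (σ (Fin.succ (Fin.succ ⟨2 * (k : ℕ) + 1, by have := k.2; omega⟩))) := by
  have h : N / 2 + 1 = (N + 2) / 2 := by omega
  rw [← (finCongr h).prod_comp, Fin.prod_univ_succ]
  congr 1

theorem pfaffian_rec {N : ℕ} (A : Matrix (Fin (N + 2)) (Fin (N + 2)) ℝ) :
    pfaffian A = ∑ k : Fin (N + 1), ((-1 : ℝ) ^ (k : ℕ) * A 0 k.succ) *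
      pfaffian (Matrix.of fun p q : Fin N =>
        A (k.succAbove p).succ (k.succAbove q).succ) := by
  by_cases hN : 2 ∣ N
  · have hN2 : 2 ∣ N + 2 := by omega
    simp only [pfaffian, dif_pos hN, dif_pos hN2, Finset.mul_sum]
    rw [← Finset.sum_product']
    symm
    refine Finset.sum_bij (fun x _ => insPerm x.1 x.2) ?_ ?_ ?_ ?_
    · rintro ⟨k, σ⟩ hx
      simp only [Finset.mem_product, Finset.mem_univ, true_and, Finset.mem_filter] at hx ⊢
      exact (insPerm_mem k σ).2 hx
    · rintro ⟨k, σ⟩ _ ⟨k', σ'⟩ _ h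
      obtain ⟨h1, h2⟩ := insPerm_inj h
      exact Prod.ext h1 h2
    · intro σ hσ
      simp only [Finset.mem_univ, true_and, Finset.mem_filter] at hσ
      have h0 : σ 0 = 0 := by
        obtain ⟨q, hq⟩ := σ.surjective 0
        have := hσ 0 q (by simp) (Fin.zero_le _)
        rw [hq] at this
        exact le_antisymm this (Fin.zero_le _)
      obtain ⟨k, τ, rfl⟩ := insPerm_surj σ h0
      refine ⟨(k, τ), ?_, rfl⟩
      simp only [Finset.mem_product, Finset.mem_univ, true_and, Finset.mem_filter]
      exact (insPerm_mem k τ).1 hσ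
    · rintro ⟨k, σ⟩ _
      rw [prod_half_succ, insPerm_sign]
      simp only [insPerm_zero, insPerm_one, insPerm_succ, Matrix.of_apply]
      ring
  · have hN2 : ¬ 2 ∣ N + 2 := by omega
    simp [pfaffian, hN]

theorem pfaffian_eq_wick {V : Type} [AddCommGroup V] [Module ℝ V]
    (b : LinearMap.BilinForm ℝ V) (h : ∀ x, b x x = 0) : ∀ (N : ℕ) (v : Fin N → V),
    pfaffian (Matrix.of fun p q => b (v p) (v q)) =
      wick b h (List.ofFn fun k => gen (v k)).prod
  | 0, v => by
    simp [pfaffian, wick_one]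
  | 1, v => by
    have := wick_gen_mul b h (v 0) 1
    simp [ctr] at this
    simp [pfaffian, this]
  | N + 2, v => by
    rw [pfaffian_rec, List.ofFn_succ, List.prod_cons, wick_gen_mul, ctr_ofFn, map_sum]
    refine Finset.sum_congr rfl fun k _ => ?_
    rw [map_smul, smul_eq_mul, ← pfaffian_eq_wick b h N]
    rfl

theorem ofFn_orderIso {n : ℕ} {β : Type} (S : Finset (Fin n)) (f : Fin n → β) :
    (List.ofFn fun p : Fin S.card => f ((S.orderIsoOfFin rfl p : S) : Fin n)) =
      ((List.finRange n).filter (fun k => k ∈ S)).map f := by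
  have h1 : ((List.finRange n).filter (fun k => k ∈ S)) = S.sort := by
    refine List.Perm.eq_of_pairwise' (r := (· ≤ ·)) ?_ (Finset.pairwise_sort S _) ?_
    · exact ((List.pairwise_lt_finRange n).imp le_of_lt).filter _
    · rw [List.perm_ext_iff_of_nodup ((List.nodup_finRange n).filter _) (Finset.sort_nodup _ _)]
      simp
  rw [h1, ← Finset.listMap_orderEmbOfFin_finRange S rfl, List.map_map, List.ofFn_eq_map]
  rfl

theorem pfMinor_eq_wick {n : ℕ} {V : Type} [AddCommGroup V] [Module ℝ V]
    (b : LinearMap.BilinForm ℝ V) (h : ∀ x, b x x = 0) (M : Matrix (Fin n) (Fin n) ℝ)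
    (v : Fin n → V) (hM : ∀ k l, M k l = b (v k) (v l)) (S : Finset (Fin n)) :
    pfMinor M S =
      wick b h (((List.finRange n).filter (fun k => k ∈ S)).map fun k => gen (v k)).prod := by
  rw [← ofFn_orderIso, ← pfaffian_eq_wick b h S.card
    (fun p => v ((S.orderIsoOfFin rfl p : S) : Fin n)), pfMinor]
  simp only [hM]

end PfRec
section Words

variable {V : Type} [AddCommGroup V] [Module ℝ V] {κ : Type}

theorem word_gen (v : κ → V) (m : V) (l : List κ) (t : WAlg V) :
    (l.map fun k => gen (v k)).prod * (gen m * t) =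
      (-1 : ℝ) ^ l.length • (gen m * ((l.map fun k => gen (v k)).prod * t)) := by
  induction l with
  | nil => simp
  | cons k l ih =>
    simp only [List.map_cons, List.prod_cons, List.length_cons, mul_assoc]
    rw [ih, mul_smul_comm, ← mul_assoc (gen (v k)), gen_swap (v k) m, neg_mul, mul_assoc, pow_succ,
      smul_neg, mul_neg_one, neg_smul]

theorem word_ctr (v : κ → V) (d : Module.Dual ℝ V) (l : List κ) (hl : ∀ k ∈ l, d (v k) = 0)
    (t : WAlg V) (ht : ctr d t = 0) :
    ctr d ((l.map fun k => gen (v k)).prod * t) = 0 := by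
  induction l with
  | nil => simpa using ht
  | cons k l ih =>
    simp only [List.map_cons, List.prod_cons, mul_assoc]
    rw [ctr_gen_mul, hl k (by simp), ih (fun k hk => hl k (by simp [hk]))]
    simp

theorem word_congr (v v' : κ → V) (l : List κ) (hl : ∀ k ∈ l, v' k = v k) :
    (l.map fun k => gen (v' k)).prod = (l.map fun k => gen (v k)).prod := by
  rw [List.map_congr_left (fun k hk => by rw [hl k hk])]

theorem word_neg (v v' : κ → V) (l : List κ) (hl : ∀ k ∈ l, v' k = - v k) :
    (l.map fun k => gen (v' k)).prod =
      (-1 : ℝ) ^ l.length • (l.map fun k => gen (v k)).prod := by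
  induction l with
  | nil => simp
  | cons k l ih =>
    simp only [List.map_cons, List.prod_cons, List.length_cons]
    rw [ih (fun k hk => hl k (by simp [hk])), hl k (by simp), pow_succ, gen, map_neg, neg_mul,
      mul_smul_comm, mul_neg_one, neg_smul]

/-- The four cases of the word identity. -/
theorem word_cases (b : LinearMap.BilinForm ℝ V) (h : ∀ x, b x x = 0) (v : κ → V)
    (l1 l2 l3 : List κ) (ei ej si sj : V)
    (hii : b si ei = -1) (hij : b si ej = 0) (hji : b sj ei = 0) (hjj : b sj ej = -1)
    (hss : b si sj = 0)
    (hsi : ∀ k, k ∈ l1 ∨ k ∈ l2 ∨ k ∈ l3 → b si (v k) = 0)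
    (hsj : ∀ k, k ∈ l1 ∨ k ∈ l2 ∨ k ∈ l3 → b sj (v k) = 0)
    (X Y Z : WAlg V)
    (hX : X = (l1.map fun k => gen (v k)).prod) (hY : Y = (l2.map fun k => gen (v k)).prod)
    (hZ : Z = (l3.map fun k => gen (v k)).prod) (ε : ℝ) (hε : ε = (-1) ^ l2.length) :
    (ε * wick b h (gen ei * (gen ej * (X * (Y * Z)))) =
      wick b h (X * (gen ei * (Y * (gen ej * Z))))) ∧
    (- ε * wick b h (gen ei * (gen ej * (X * (gen si * (Y * Z))))) =
      wick b h (X * (Y * (gen ej * Z)))) ∧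
    (ε * wick b h (gen ei * (gen ej * (X * (Y * (gen sj * Z))))) =
      wick b h (X * (gen ei * (Y * Z)))) ∧
    (- ε * wick b h (gen ei * (gen ej * (X * (gen si * (Y * (gen sj * Z)))))) =
      wick b h (X * (Y * Z))) := by
  have cX : ∀ m t, X * (gen m * t) = (-1 : ℝ) ^ l1.length • (gen m * (X * t)) := by
    subst hX; exact fun m t => word_gen v m l1 t
  have cY : ∀ m t, Y * (gen m * t) = ε • (gen m * (Y * t)) := by
    subst hY hε; exact fun m t => word_gen v m l2 t
  have ki : ctr (b si) (X * (Y * Z)) = 0 := by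
    subst hX hY hZ
    refine word_ctr _ _ _ (fun k hk => hsi k (by simp [hk])) _ ?_
    refine word_ctr _ _ _ (fun k hk => hsi k (by simp [hk])) _ ?_
    rw [← mul_one (List.prod _)]
    exact word_ctr _ _ _ (fun k hk => hsi k (by simp [hk])) _ (by simp [ctr])
  have kj : ctr (b sj) (X * (Y * Z)) = 0 := by
    subst hX hY hZ
    refine word_ctr _ _ _ (fun k hk => hsj k (by simp [hk])) _ ?_
    refine word_ctr _ _ _ (fun k hk => hsj k (by simp [hk])) _ ?_
    rw [← mul_one (List.prod _)]
    exact word_ctr _ _ _ (fun k hk => hsj k (by simp [hk])) _ (by simp [ctr])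
  have hε2 : ε * ε = 1 := by rw [hε, ← mul_pow]; simp
  obtain ⟨δ, hδ⟩ : ∃ δ : ℝ, δ = (-1 : ℝ) ^ l1.length := ⟨_, rfl⟩
  have hδ2 : δ * δ = 1 := by rw [hδ, ← mul_pow]; simp
  rw [← hδ] at cX
  have pull : ∀ m t, gen ei * (gen ej * (gen m * t)) = gen m * (gen ei * (gen ej * t)) := by
    intro m t
    rw [← mul_assoc (gen ej), gen_swap ej m, neg_mul, mul_neg, mul_assoc, ← mul_assoc (gen ei),
      gen_swap ei m, neg_mul, neg_neg, mul_assoc]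
  have f1 : wick b h (gen ei * (gen ej * (gen si * (X * (Y * Z))))) =
      - wick b h (gen ej * (X * (Y * Z))) := by
    rw [pull, wick_gen_mul, ctr_gen_mul, ctr_gen_mul, ki, hii, hij]
    simp
  have f2 : wick b h (gen ei * (gen ej * (gen sj * (X * (Y * Z))))) =
      wick b h (gen ei * (X * (Y * Z))) := by
    rw [pull, wick_gen_mul, ctr_gen_mul, ctr_gen_mul, kj, hji, hjj]
    simp
  have f3 : wick b h (gen ei * (gen ej * (gen si * (gen sj * (X * (Y * Z)))))) =
      - wick b h (X * (Y * Z)) := by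
    rw [pull, pull, wick_gen_mul, ctr_gen_mul, ctr_gen_mul, ctr_gen_mul, ki, hii, hij, hss]
    simp only [mul_zero, sub_zero, zero_smul, neg_smul, one_smul, mul_neg, zero_sub, neg_neg]
    rw [wick_gen_mul, ctr_gen_mul, kj, hjj]
    simp
  refine ⟨?_, ?_, ?_, ?_⟩
  · simp only [cX, cY, mul_smul_comm, map_smul, smul_eq_mul]
    linear_combination (-ε * wick b h (gen ei * (gen ej * (X * (Y * Z))))) * hδ2
  · simp only [cX, cY, mul_smul_comm, map_smul, smul_eq_mul, f1]
    ring
  · simp only [cX, cY, mul_smul_comm, map_smul, smul_eq_mul, f2]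
    linear_combination (δ * wick b h (gen ei * (X * (Y * Z)))) * hε2
  · simp only [cX, cY, mul_smul_comm, map_smul, smul_eq_mul, f3]
    linear_combination (wick b h (X * (Y * Z))) * (ε * ε * hδ2 + hε2)

end Words
section Final

theorem finRange_split {n : ℕ} (i j : Fin n) (hij : i < j) : ∃ l1 l2 l3 : List (Fin n),
    List.finRange n = l1 ++ i :: (l2 ++ j :: l3) ∧ (∀ k ∈ l1, k < i) ∧
      (∀ k ∈ l2, i < k ∧ k < j) ∧ (∀ k ∈ l3, j < k) := by
  have hp := List.pairwise_lt_finRange n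
  obtain ⟨l1, l', h1⟩ := List.append_of_mem (List.mem_finRange i)
  have hj : j ∈ l' := by
    have hj := List.mem_finRange j
    rw [h1] at hj hp
    rw [List.pairwise_append] at hp
    simp only [List.mem_append, List.mem_cons] at hj
    rcases hj with hj | hj | hj
    · exact absurd (hp.2.2 j hj i (by simp)) (by simpa using hij.le)
    · exact absurd hj hij.ne'
    · exact hj
  obtain ⟨l2, l3, h2⟩ := List.append_of_mem hj
  subst h2
  refine ⟨l1, l2, l3, h1, ?_⟩
  rw [h1, List.pairwise_append, List.pairwise_cons, List.pairwise_append, List.pairwise_cons] at hp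
  obtain ⟨-, ⟨h3, -, ⟨h4, -⟩, h5⟩, h6⟩ := hp
  refine ⟨fun k hk => h6 k hk i (by simp), fun k hk => ⟨h3 k (by simp [hk]), h5 k hk j (by simp)⟩,
    fun k hk => h4 k hk⟩

theorem B_formula {n : ℕ} (A B : Matrix (Fin n) (Fin n) ℝ)
    (hA : ∀ k l, A k l = - A l k) (i j : Fin n) (hij : i ≠ j) (ha : A i j ≠ 0)
    (hB : swapRight A i j * B = swapLeft A i j) :
    (∀ l, B j l = (A i j)⁻¹ * swapLeft A i j i l) ∧
    (∀ l, B i l = - (A i j)⁻¹ * swapLeft A i j j l) ∧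
    (∀ r, r ≠ i → r ≠ j → ∀ l, B r l = swapLeft A i j r l - A r i * B i l - A r j * B j l) := by
  have hd : ∀ k, A k k = 0 := fun k => by have := hA k k; linarith
  have key : ∀ r l, swapLeft A i j r l = A r i * B i l + A r j * B j l +
      (if r = i ∨ r = j then 0 else B r l) := by
    intro r l
    rw [← hB, Matrix.mul_apply]
    have : ∀ c, swapRight A i j r c * B c l = (if c = i then A r i * B i l else 0) +
        (if c = j then A r j * B j l else 0) +
        (if c = r then (if r = i ∨ r = j then 0 else B r l) else 0) := by
      intro c
      simp only [swapRight, Matrix.of_apply]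
      by_cases h1 : c = i
      · subst h1
        by_cases h3 : c = r
        · subst h3; simp [hij]
        · simp [hij, h3]
      · by_cases h2 : c = j
        · subst h2
          by_cases h3 : c = r
          · subst h3; simp [h1]
          · simp [h1, h3]
        · by_cases h3 : c = r
          · subst h3; simp [h1, h2]
          · simp [h1, h2, h3, Ne.symm h3]
    simp_rw [this]
    rw [Finset.sum_add_distrib, Finset.sum_add_distrib]
    simp
  refine ⟨fun l => ?_, fun l => ?_, fun r h1 h2 l => ?_⟩
  · rw [key, hd]; simp; field_simp
  · rw [key, hd, hA j i]; simp; field_simp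
  · rw [key]; simp only [h1, h2, or_self, if_false]; ring

end Final

/-- With `A` skew-symmetric, `i < j`, `a_{ij} ≠ 0`, and `B` as in the
column-exchange construction, let `C` be the skew-symmetric matrix obtained from
`B` by multiplying rows `k` and columns `k` by `−1` for all `i ≤ k < j`.  Then for
every subset `S` of `{1,…,n}`, `Pf(C_S) = Pf(A_{S Δ {i,j}})/a_{ij}`. -/
theorem columnExchange_pfaffian_minors {n : ℕ} (A B : Matrix (Fin n) (Fin n) ℝ)
    (hA : A.transpose = -A) (i j : Fin n) (hij : i < j) (ha : A i j ≠ 0)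
    (hB : swapRight A i j * B = swapLeft A i j) :
    ∀ S : Finset (Fin n),
      pfMinor (Matrix.of fun k l => rhoSign i j k * rhoSign i j l * B k l) S =
        pfMinor A (symmDiff S {i, j}) / A i j := by
  intro S
  have hA' : ∀ k l, A k l = - A l k := fun k l => by
    have := congrFun (congrFun hA l) k
    simpa using this
  have hd : ∀ k, A k k = 0 := fun k => by have := hA' k k; linarith
  have hne : i ≠ j := hij.ne
  obtain ⟨Bj, Bi, Br⟩ := B_formula A B hA' i j hne ha hB
  -- the extended form
  let E : Matrix (Fin n) Bool ℝ := Matrix.of fun k s => if k = (if s then j else i) then 1 else 0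
  let M : Matrix (Fin n ⊕ Bool) (Fin n ⊕ Bool) ℝ := Matrix.fromBlocks A E (-E.transpose) 0
  have hM : M.transpose = - M := by
    simp [M, Matrix.fromBlocks_transpose, hA, Matrix.fromBlocks_neg]
  let b : LinearMap.BilinForm ℝ (Fin n ⊕ Bool → ℝ) := Matrix.toBilin' M
  have hb : ∀ x, b x x = 0 := by
    intro x
    have h1 : b x x = x ⬝ᵥ M.mulVec x := Matrix.toBilin'_apply' M x x
    have h2 : x ⬝ᵥ M.mulVec x = - (x ⬝ᵥ M.mulVec x) := by
      conv_lhs => rw [Matrix.dotProduct_mulVec, ← Matrix.mulVec_transpose, hM, dotProduct_comm]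
      simp [Matrix.neg_mulVec]
    rw [h1]; linarith
  let v : Fin n → (Fin n ⊕ Bool → ℝ) := fun k => Pi.single (Sum.inl k) 1
  let s : Bool → (Fin n ⊕ Bool → ℝ) := fun t => Pi.single (Sum.inr t) 1
  have bvv : ∀ k l, b (v k) (v l) = A k l := fun k l => by simp [b, v, M]
  have bvs : ∀ k t, b (v k) (s t) = if k = (if t then j else i) then 1 else 0 := fun k t => by
    simp [b, v, s, M, E]
  have bsv : ∀ k t, b (s t) (v k) = - if k = (if t then j else i) then 1 else 0 := fun k t => by
    simp [b, v, s, M, E]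
  have bss : ∀ t t', b (s t) (s t') = 0 := fun t t' => by
    simp [b, s, M]
  clear_value s v b
  let b' : LinearMap.BilinForm ℝ (Fin n ⊕ Bool → ℝ) :=
    b + (b (v i) (v j))⁻¹ • ((b.flip (v i)).smulRight (b (v j)) -
      (b.flip (v j)).smulRight (b (v i)))
  have hb'm : ∀ m, b' m = b m + (b (v i) (v j))⁻¹ •
      (b m (v i) • b (v j) - b m (v j) • b (v i)) := fun m => by
    simp [b']
  clear_value b'
  have hskew : ∀ x y, b x y = - b y x := fun x y => by
    have := hb (x + y)
    simp [hb] at this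
    linarith
  have hb'2 : ∀ x y, b' x y = b x y + (A i j)⁻¹ *
      (b x (v i) * b (v j) y - b x (v j) * b (v i) y) := fun x y => by
    rw [hb'm, bvv]; simp
  have hb' : ∀ x, b' x x = 0 := fun x => by
    rw [hb'2, hb, hskew (v j) x, hskew (v i) x]; ring
  let u : Fin n → (Fin n ⊕ Bool → ℝ) := fun k => if k = i then s false else if k = j then s true else v k
  have ui : u i = s false := by simp [u]
  have uj : u j = s true := by simp [u, hne.symm]
  have ur : ∀ k, k ≠ i → k ≠ j → u k = v k := fun k h1 h2 => by simp [u, h1, h2]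
  clear_value u
  have hBu : ∀ k l, B k l = b' (u k) (u l) := by
    intro k l
    have Li : ∀ k l, swapLeft A i j k l =
      if l = i ∨ l = j then (if k = l then 1 else 0) else A k l := fun k l => rfl
    rw [hb'2]
    by_cases k1 : k = i
    · subst k1
      rw [Bi, ui, Li]
      by_cases l1 : l = k
      · subst l1; rw [ui]; simp [bvs, bsv, bss, hne, hne.symm]
      · by_cases l2 : l = j
        · subst l2; rw [uj]; simp [bvs, bsv, bss, hne, hne.symm]
        · rw [ur l l1 l2]; simp [bvs, bsv, bss, bvv, hne, hne.symm, l1, l2]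
    · by_cases k2 : k = j
      · subst k2
        rw [Bj, uj, Li]
        by_cases l1 : l = i
        · subst l1; rw [ui]; simp [bvs, bsv, bss, hne, hne.symm]
        · by_cases l2 : l = k
          · subst l2; rw [uj]; simp [bvs, bsv, bss, hne, hne.symm]
          · rw [ur l l1 l2]; simp [bvs, bsv, bss, bvv, hne, hne.symm, l1, l2]
      · rw [Br k k1 k2, Bi, Bj, ur k k1 k2, Li, Li, Li]
        by_cases l1 : l = i
        · subst l1; rw [ui]; simp [bvs, bsv, bss, bvv, hne, hne.symm, k1, k2]; ring
        · by_cases l2 : l = j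
          · subst l2; rw [uj]; simp [bvs, bsv, bss, bvv, hne, hne.symm, k1, k2]; ring
          · rw [ur l l1 l2]; simp [bvs, bsv, bss, bvv, hne, hne.symm, l1, l2]; ring
  rw [pfMinor_eq_wick b' hb' _ (fun k => rhoSign i j k • u k)
    (fun k l => by simp [hBu]; ring) S, pfMinor_eq_wick b hb A v (fun k l => (bvv k l).symm),
    eq_div_iff ha, mul_comm, ← bvv i j, ← schur_aux b b' hb hb' (v i) (v j) (by rwa [bvv]) hb'm]
  obtain ⟨l1, l2, l3, hl, h1, h2, h3⟩ := finRange_split i j hij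
  rw [hl]
  simp only [List.filter_append, List.filter_cons]
  have hf : ∀ l : List (Fin n), (∀ k ∈ l, k ≠ i ∧ k ≠ j) →
      l.filter (fun k => k ∈ symmDiff S {i, j}) = l.filter (fun k => k ∈ S) := by
    intro l hl
    refine List.filter_congr fun k hk => ?_
    have := hl k hk
    simp [Finset.mem_symmDiff, this.1, this.2]
  rw [hf l1 (fun k hk => ⟨(h1 k hk).ne, ((h1 k hk).trans hij).ne⟩),
    hf l2 (fun k hk => ⟨(h2 k hk).1.ne', (h2 k hk).2.ne⟩),
    hf l3 (fun k hk => ⟨(hij.trans (h3 k hk)).ne', (h3 k hk).ne'⟩)]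
  have g1 : ∀ k ∈ l1.filter (fun k => k ∈ S), k < i := fun k hk => h1 k (List.mem_filter.1 hk).1
  have g2 : ∀ k ∈ l2.filter (fun k => k ∈ S), i < k ∧ k < j :=
    fun k hk => h2 k (List.mem_filter.1 hk).1
  have g3 : ∀ k ∈ l3.filter (fun k => k ∈ S), j < k := fun k hk => h3 k (List.mem_filter.1 hk).1
  generalize l1.filter (fun k => k ∈ S) = m1 at *
  generalize l2.filter (fun k => k ∈ S) = m2 at *
  generalize l3.filter (fun k => k ∈ S) = m3 at *
  have hni : ∀ k, k ∈ m1 ∨ k ∈ m2 ∨ k ∈ m3 → k ≠ i ∧ k ≠ j := by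
    rintro k (hk | hk | hk)
    · exact ⟨(g1 k hk).ne, ((g1 k hk).trans hij).ne⟩
    · exact ⟨(g2 k hk).1.ne', (g2 k hk).2.ne⟩
    · exact ⟨(hij.trans (g3 k hk)).ne', (g3 k hk).ne'⟩
  obtain ⟨w1, w2, w3, w4⟩ := word_cases b hb v m1 m2 m3 (v i) (v j) (s false) (s true)
    (by simp [bsv]) (by simp [bsv, hne.symm]) (by simp [bsv, hne]) (by simp [bsv]) (bss _ _)
    (fun k hk => by simp [bsv, hni k hk]) (fun k hk => by simp [bsv, hni k hk]) _ _ _ rfl rfl rfl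
    _ rfl
  have r1 : ∀ k ∈ m1, rhoSign i j k • u k = v k := fun k hk => by
    rw [ur k (hni k (by simp [hk])).1 (hni k (by simp [hk])).2, rhoSign, if_neg, one_smul]
    exact fun hc => absurd hc.1 (not_le.2 (g1 k hk))
  have r2 : ∀ k ∈ m2, rhoSign i j k • u k = - v k := fun k hk => by
    rw [ur k (hni k (by simp [hk])).1 (hni k (by simp [hk])).2, rhoSign, if_pos, neg_one_smul]
    exact ⟨(g2 k hk).1.le, (g2 k hk).2⟩
  have r3 : ∀ k ∈ m3, rhoSign i j k • u k = v k := fun k hk => by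
    rw [ur k (hni k (by simp [hk])).1 (hni k (by simp [hk])).2, rhoSign, if_neg, one_smul]
    exact fun hc => absurd hc.2 (not_lt.2 (g3 k hk).le)
  have ri : gen (rhoSign i j i • u i) = - gen (s false) := by
    rw [ui, rhoSign, if_pos ⟨le_rfl, hij⟩, neg_one_smul, gen, map_neg]
  have rj : gen (rhoSign i j j • u j) = gen (s true) := by
    rw [uj, rhoSign, if_neg (by simp), one_smul]
  have p1 := word_congr v (fun k => rhoSign i j k • u k) m1 r1
  have p2 := word_neg v (fun k => rhoSign i j k • u k) m2 r2
  have p3 := word_congr v (fun k => rhoSign i j k • u k) m3 r3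
  by_cases hi : i ∈ S <;> by_cases hj : j ∈ S
  · have e1 : i ∉ symmDiff S {i, j} := by simp [Finset.mem_symmDiff, hi]
    have e2 : j ∉ symmDiff S {i, j} := by simp [Finset.mem_symmDiff, hj]
    simp only [hi, hj, e1, e2, decide_true, decide_false, if_true, if_false, List.map_append,
      List.map_cons, List.prod_append, List.prod_cons, p1, p2, p3, ri, rj, Bool.false_eq_true]
    rw [← w4]
    simp only [smul_mul_assoc, mul_smul_comm, neg_mul, mul_neg, map_neg, map_smul, smul_eq_mul]
  · have e1 : i ∉ symmDiff S {i, j} := by simp [Finset.mem_symmDiff, hi]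
    have e2 : j ∈ symmDiff S {i, j} := by simp [Finset.mem_symmDiff, hj]
    simp only [hi, hj, e1, e2, decide_true, decide_false, if_true, if_false, List.map_append,
      List.map_cons, List.prod_append, List.prod_cons, p1, p2, p3, ri, rj, Bool.false_eq_true]
    rw [← w2]
    simp only [smul_mul_assoc, mul_smul_comm, neg_mul, mul_neg, map_neg, map_smul, smul_eq_mul]
  · have e1 : i ∈ symmDiff S {i, j} := by simp [Finset.mem_symmDiff, hi]
    have e2 : j ∉ symmDiff S {i, j} := by simp [Finset.mem_symmDiff, hj]
    simp only [hi, hj, e1, e2, decide_true, decide_false, if_true, if_false, List.map_append,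
      List.map_cons, List.prod_append, List.prod_cons, p1, p2, p3, ri, rj, Bool.false_eq_true]
    rw [← w3]
    simp only [smul_mul_assoc, mul_smul_comm, neg_mul, mul_neg, map_neg, map_smul, smul_eq_mul]
  · have e1 : i ∈ symmDiff S {i, j} := by simp [Finset.mem_symmDiff, hi]
    have e2 : j ∈ symmDiff S {i, j} := by simp [Finset.mem_symmDiff, hj]
    simp only [hi, hj, e1, e2, decide_true, decide_false, if_true, if_false, List.map_append,
      List.map_cons, List.prod_append, List.prod_cons, p1, p2, p3, ri, rj, Bool.false_eq_true]
    rw [← w1]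
    simp only [smul_mul_assoc, mul_smul_comm, neg_mul, mul_neg, map_neg, map_smul, smul_eq_mul]
end

section
/- Let C be a real k×n matrix of rank k representing an oriented matroid M, and let T be a basis of M (a k-set of columns with nonzero determinant, say det(T) ≠ 0). Define the n×n matrix A by a_{ij} = det(T Δ {i,j})/det(T), where det(S) denotes the determinant of the columns of C indexed by S if |S| = k and 0 otherwise. Then A is skew-symmetric, and the map S ↦ sign Pf(A_{S Δ T}) agrees (up to global sign) with the map assigning to each k-set S the sign of the corresponding minor of C, extended by zero to sets of other cardinalities. -/
/-- The `k × k` minor of a `k × n` matrix `C` on a set `S` of column indices, taken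
in increasing order: it is the determinant of the columns of `C` indexed by `S` if
`S` has cardinality `k`, and `0` otherwise. -/
noncomputable def colDet {k n : ℕ} (C : Matrix (Fin k) (Fin n) ℝ)
    (S : Finset (Fin n)) : ℝ :=
  if h : S.card = k then
    Matrix.det (Matrix.of fun i j : Fin k => C i ((S.orderIsoOfFin h j : S) : Fin n))
  else 0

/-- extend a permutation -/
def extPerm {M : ℕ} (j : Fin (M+1)) (τ : Equiv.Perm (Fin M)) : Equiv.Perm (Fin (M+2)) :=
  Equiv.Perm.decomposeFin.symm (0, j.cycleRange.symm * Equiv.Perm.decomposeFin.symm (0, τ))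

theorem extPerm_zero {M : ℕ} (j : Fin (M+1)) (τ : Equiv.Perm (Fin M)) : extPerm j τ 0 = 0 := by
  simp [extPerm]
theorem extPerm_one {M : ℕ} (j : Fin (M+1)) (τ : Equiv.Perm (Fin M)) :
    extPerm j τ (Fin.succ 0) = j.succ := by
  simp only [extPerm]
  rw [Equiv.Perm.decomposeFin_symm_apply_succ]
  simp
theorem extPerm_succ {M : ℕ} (j : Fin (M+1)) (τ : Equiv.Perm (Fin M)) (q : Fin M) :
    extPerm j τ q.succ.succ = (j.succAbove (τ q)).succ := by
  simp only [extPerm]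
  rw [Equiv.Perm.decomposeFin_symm_apply_succ]
  simp
theorem extPerm_sign {M : ℕ} (j : Fin (M+1)) (τ : Equiv.Perm (Fin M)) :
    Equiv.Perm.sign (extPerm j τ) = (-1)^(j:ℕ) * Equiv.Perm.sign τ := by
  simp [extPerm, Equiv.Perm.sign_symm]

theorem extPerm_surj {M : ℕ} (σ : Equiv.Perm (Fin (M+2))) (h : σ 0 = 0) :
    ∃ j τ, extPerm j τ = σ := by
  obtain ⟨⟨p, ρ⟩, rfl⟩ := Equiv.Perm.decomposeFin.symm.surjective σ
  simp at h
  subst h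
  obtain ⟨⟨p, τ⟩, hτ⟩ := Equiv.Perm.decomposeFin.symm.surjective ((ρ 0).cycleRange * ρ)
  have hp : p = 0 := by
    have := congrArg (fun e => e 0) hτ
    simpa using this
  subst hp
  refine ⟨ρ 0, τ, ?_⟩
  unfold extPerm
  rw [hτ]
  congr 2
  ext x
  simp

theorem extPerm_inj {M : ℕ} {j j' : Fin (M+1)} {τ τ' : Equiv.Perm (Fin M)}
    (h : extPerm j τ = extPerm j' τ') : j = j' ∧ τ = τ' := by
  have h1 := congrArg (fun e => e (Fin.succ 0)) h
  simp only [extPerm_one, Fin.succ_inj] at h1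
  subst h1
  refine ⟨rfl, ?_⟩
  ext q
  have h2 := congrArg (fun e => e q.succ.succ) h
  simp only [extPerm_succ, Fin.succ_inj] at h2
  rw [Fin.succAbove_right_injective h2]

/-- admissibility -/
def Adm {N : ℕ} (σ : Equiv.Perm (Fin N)) : Prop :=
  ∀ p q : Fin N, 2 ∣ (p : ℕ) → p ≤ q → σ p ≤ σ q

theorem extPerm_adm {M : ℕ} (j : Fin (M+1)) (τ : Equiv.Perm (Fin M)) :
    Adm (extPerm j τ) ↔ Adm τ := by
  constructor
  · intro h p q hp hpq
    have := h p.succ.succ q.succ.succ (by simp; omega) (by simpa using hpq)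
    simpa [extPerm_succ] using this
  · intro h p q hp hpq
    induction p using Fin.cases with
    | zero => simp [extPerm_zero]
    | succ p =>
      induction p using Fin.cases with
      | zero => simp at hp
      | succ p =>
        induction q using Fin.cases with
        | zero => simp [Fin.le_def] at hpq
        | succ q =>
          induction q using Fin.cases with
          | zero => simp [Fin.le_def] at hpq
          | succ q =>
            have := h p q (by simp at hp; omega) (by simpa using hpq)
            simpa [extPerm_succ] using this

theorem adm_zero {M : ℕ} (σ : Equiv.Perm (Fin (M+2))) (h : Adm σ) : σ 0 = 0 := by
  have := h 0 (σ.symm 0) (by simp) (Fin.zero_le _)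
  simpa using this

theorem pfaffian_succ {M : ℕ} (A : Matrix (Fin (M+2)) (Fin (M+2)) ℝ) :
    pfaffian A = ∑ j : Fin (M+1), (-1)^(j:ℕ) * A 0 j.succ *
      pfaffian (Matrix.of fun p q : Fin M => A (j.succAbove p).succ (j.succAbove q).succ) := by
  by_cases h2 : 2 ∣ M
  · unfold pfaffian
    rw [dif_pos (by omega)]
    simp only [dif_pos h2, Finset.mul_sum]
    rw [Finset.sum_sigma']
    symm
    refine Finset.sum_bij (fun x _ => extPerm x.1 x.2) ?_ ?_ ?_ ?_
    · rintro ⟨j, τ⟩ h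
      simp only [Finset.mem_sigma, Finset.mem_filter, Finset.mem_univ, true_and] at h ⊢
      exact (extPerm_adm j τ).2 h
    · rintro ⟨j, τ⟩ h ⟨j', τ'⟩ h' he
      obtain ⟨rfl, rfl⟩ := extPerm_inj he
      rfl
    · intro σ hσ
      simp only [Finset.mem_filter, Finset.mem_univ, true_and] at hσ
      obtain ⟨j, τ, rfl⟩ := extPerm_surj σ (adm_zero σ hσ)
      refine ⟨⟨j, τ⟩, ?_, rfl⟩
      simp only [Finset.mem_sigma, Finset.mem_filter, Finset.mem_univ, true_and]
      exact (extPerm_adm j τ).1 hσ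
    · rintro ⟨j, τ⟩ h
      have hM : M / 2 + 1 = (M + 2) / 2 := by omega
      rw [← Equiv.prod_comp (finCongr hM), Fin.prod_univ_succ, extPerm_sign]
      have e0 : ∀ h, (⟨2 * ((finCongr hM 0 : Fin _) : ℕ), h⟩ : Fin (M+2)) = 0 := by
        intro h; ext; simp
      have e1 : ∀ h, (⟨2 * ((finCongr hM 0 : Fin _) : ℕ) + 1, h⟩ : Fin (M+2)) = Fin.succ 0 := by
        intro h; ext; simp
      have e2 : ∀ (i : Fin (M/2)) h h', (⟨2 * ((finCongr hM i.succ : Fin _) : ℕ), h⟩ : Fin (M+2))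
          = Fin.succ (Fin.succ ⟨2 * (i:ℕ), h'⟩) := by
        intro i h h'; ext; simp; ring
      have e3 : ∀ (i : Fin (M/2)) h h', (⟨2 * ((finCongr hM i.succ : Fin _) : ℕ) + 1, h⟩ : Fin (M+2))
          = Fin.succ (Fin.succ ⟨2 * (i:ℕ) + 1, h'⟩) := by
        intro i h h'; ext; simp; ring
      rw [e0, e1, extPerm_zero, extPerm_one]
      have e4 : ∀ i : Fin (M/2), 2 * (i:ℕ) + 1 < M := fun i => by have := i.2; omega
      simp only [e2 _ _ ((Nat.lt_succ_self _).trans (e4 _)), e3 _ _ (e4 _), extPerm_succ, Matrix.of_apply]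
      push_cast
      ring
  · unfold pfaffian
    rw [dif_neg (by omega)]
    simp [dif_neg h2]

theorem emb_erase {n m : ℕ} (X : Finset (Fin n)) (h : X.card = m+1) (j : Fin (m+1))
    (h' : (X.erase (X.orderEmbOfFin h j)).card = m) :
    (X.erase (X.orderEmbOfFin h j)).orderEmbOfFin h' = X.orderEmbOfFin h ∘ j.succAbove := by
  symm
  apply Finset.orderEmbOfFin_unique
  · intro x
    simp [Fin.succAbove_ne]
  · exact (X.orderEmbOfFin h).strictMono.comp (Fin.strictMono_succAbove j)

theorem emb_count {n m : ℕ} (X : Finset (Fin n)) (h : X.card = m) (j : Fin m) :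
    (X.filter (· < X.orderEmbOfFin h j)).card = j := by
  have : X.filter (· < X.orderEmbOfFin h j) =
      (Finset.univ.filter (· < j)).map (X.orderEmbOfFin h).toEmbedding := by
    ext x
    simp only [Finset.mem_filter, Finset.mem_map, Finset.mem_univ, true_and]
    constructor
    · rintro ⟨hx, hlt⟩
      have : x ∈ Set.range (X.orderEmbOfFin h) := by simpa using hx
      obtain ⟨y, rfl⟩ := this
      exact ⟨y, by simpa using hlt, rfl⟩
    · rintro ⟨y, hy, rfl⟩
      exact ⟨by simp, by simpa using hy⟩
  rw [this, Finset.card_map, Finset.filter_gt_eq_Iio, Fin.card_Iio]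

theorem colDet_eq {k n : ℕ} (C : Matrix (Fin k) (Fin n) ℝ)
    (S : Finset (Fin n)) (h : S.card = k) :
    colDet C S = Matrix.det (Matrix.of fun i j : Fin k => C i (S.orderEmbOfFin h j)) := by
  unfold colDet
  rw [dif_pos h]
  rfl

theorem colDet_ne {k n : ℕ} (C : Matrix (Fin k) (Fin n) ℝ)
    (S : Finset (Fin n)) (h : S.card ≠ k) : colDet C S = 0 := by
  unfold colDet
  rw [dif_neg h]

theorem colDet_insert {m n : ℕ} (C : Matrix (Fin (m+1)) (Fin n) ℝ)
    (V : Finset (Fin n)) (h : V.card = m) (i : Fin n) :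
    (-1)^(V.filter (· < i)).card * colDet C (insert i V) =
      ∑ r : Fin (m+1), (-1)^(r:ℕ) * C r i *
        Matrix.det (Matrix.of fun p q : Fin m => C (r.succAbove p) (V.orderEmbOfFin h q)) := by
  by_cases hi : i ∈ V
  · rw [Finset.insert_eq_of_mem hi, colDet_ne _ _ (by omega), mul_zero]
    have : i ∈ Set.range (V.orderEmbOfFin h) := by simpa using hi
    obtain ⟨q, hq⟩ := this
    have h0 : Matrix.det (Matrix.of fun r s : Fin (m+1) =>
        C r ((Fin.cons i (V.orderEmbOfFin h) : Fin (m+1) → Fin n) s)) = 0 := by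
      apply Matrix.det_zero_of_column_eq (i := 0) (j := q.succ) (Fin.succ_ne_zero q).symm
      intro r
      simp [hq]
    rw [Matrix.det_succ_column_zero] at h0
    rw [← h0]
    rfl
  · have hc : (insert i V).card = m + 1 := by rw [Finset.card_insert_of_notMem hi, h]
    have : i ∈ Set.range ((insert i V).orderEmbOfFin hc) := by simp
    obtain ⟨j, hj⟩ := this
    have hcount := emb_count _ hc j
    rw [hj, Finset.filter_insert, if_neg (lt_irrefl i)] at hcount
    have hV : (insert i V).erase ((insert i V).orderEmbOfFin hc j) = V := by
      rw [hj, Finset.erase_insert hi]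
    have he := emb_erase _ hc j (by rw [hV, h])
    have he' : V.orderEmbOfFin h = (insert i V).orderEmbOfFin hc ∘ j.succAbove := by
      rw [← he]; congr 2; exact hV.symm
    rw [colDet_eq C _ hc, Matrix.det_succ_column _ j, hcount, Finset.mul_sum]
    refine Finset.sum_congr rfl fun r _ => ?_
    have e : ((-1:ℝ)^(j:ℕ)) * (-1)^(j:ℕ) = 1 := by rw [← mul_pow]; simp
    rw [he']
    simp only [Matrix.of_apply, hj, pow_add]
    calc _ = ((-1:ℝ)^(j:ℕ) * (-1)^(j:ℕ)) * ((-1)^(r:ℕ) * C r i *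
          Matrix.det ((Matrix.of fun a b => C a ((insert i V).orderEmbOfFin hc b)).submatrix
            r.succAbove j.succAbove)) := by ring
      _ = _ := by rw [e, one_mul]; rfl

theorem colDet_vec {k n : ℕ} (C : Matrix (Fin k) (Fin n) ℝ)
    (U : Finset (Fin n)) (h : U.card = k+1) (r : Fin k) :
    ∑ j : Fin (k+1), (-1)^(j:ℕ) * C r (U.orderEmbOfFin h j) *
      colDet C (U.erase (U.orderEmbOfFin h j)) = 0 := by
  have h0 : Matrix.det (Matrix.of fun p q : Fin (k+1) =>
      ((Fin.cons (C r) C : Fin (k+1) → Fin n → ℝ) p) (U.orderEmbOfFin h q)) = 0 := by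
    apply Matrix.det_zero_of_row_eq (i := 0) (j := r.succ) (Fin.succ_ne_zero r).symm
    rfl
  rw [Matrix.det_succ_row_zero] at h0
  rw [← h0]
  refine Finset.sum_congr rfl fun j _ => ?_
  have hc : (U.erase (U.orderEmbOfFin h j)).card = k := by
    rw [Finset.card_erase_of_mem (by simp), h]; rfl
  rw [colDet_eq C _ hc, emb_erase]
  rfl

theorem plucker_fin {k n : ℕ} (C : Matrix (Fin k) (Fin n) ℝ)
    (U V : Finset (Fin n)) (hU : U.card = k+1) (hV : V.card + 1 = k) :
    ∑ j : Fin (k+1), (-1)^(j:ℕ) * colDet C (U.erase (U.orderEmbOfFin hU j)) *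
      ((-1)^(V.filter (· < U.orderEmbOfFin hU j)).card *
        colDet C (insert (U.orderEmbOfFin hU j) V)) = 0 := by
  subst hV
  simp only [colDet_insert C V rfl, Finset.mul_sum]
  rw [Finset.sum_comm]
  refine Finset.sum_eq_zero fun r _ => ?_
  have := colDet_vec C U hU r
  set D := Matrix.det (Matrix.of fun p q : Fin V.card => C (r.succAbove p) (V.orderEmbOfFin rfl q))
  calc _ = ((-1)^(r:ℕ) * D) * ∑ j : Fin (V.card+1+1), (-1)^(j:ℕ) * C r (U.orderEmbOfFin hU j) *
      colDet C (U.erase (U.orderEmbOfFin hU j)) := by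
        rw [Finset.mul_sum]
        refine Finset.sum_congr rfl fun j _ => ?_
        ring
    _ = 0 := by rw [this, mul_zero]

theorem sum_emb {n m : ℕ} (X : Finset (Fin n)) (h : X.card = m) (f : Fin n → ℝ) :
    ∑ i ∈ X, f i = ∑ j : Fin m, f (X.orderEmbOfFin h j) := by
  have : X = Finset.univ.map (X.orderEmbOfFin h).toEmbedding := by
    apply Finset.coe_injective; simp
  conv_lhs => rw [this]
  rw [Finset.sum_map]
  rfl

theorem card_symmDiff_parity {α : Type*} [DecidableEq α] (U V : Finset α) :
    ∃ t, (symmDiff U V).card + 2 * t = U.card + V.card := by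
  refine ⟨(U ∩ V).card, ?_⟩
  have h1 : (symmDiff U V).card = (U \ V).card + (V \ U).card := by
    rw [symmDiff_def]
    exact Finset.card_union_of_disjoint (disjoint_sdiff_sdiff)
  have h2 := Finset.card_sdiff_add_card_inter U V
  have h3 := Finset.card_sdiff_add_card_inter V U
  rw [Finset.inter_comm] at h3
  omega

theorem filter_parity {n : ℕ} (U V : Finset (Fin n)) (i : Fin n) :
    (-1:ℝ)^((symmDiff U V).filter (· < i)).card =
      (-1)^(U.filter (· < i)).card * (-1)^(V.filter (· < i)).card := by
  have : (symmDiff U V).filter (· < i) = symmDiff (U.filter (· < i)) (V.filter (· < i)) := by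
    ext x; simp only [Finset.mem_filter, Finset.mem_symmDiff]; tauto
  obtain ⟨t, ht⟩ := card_symmDiff_parity (U.filter (· < i)) (V.filter (· < i))
  rw [this, ← pow_add, ← ht, pow_add, pow_mul]
  simp

theorem symmDiff_single_mem {α : Type*} [DecidableEq α] {U : Finset α} {i : α} (h : i ∈ U) :
    symmDiff U {i} = U.erase i := by
  ext x; simp only [Finset.mem_symmDiff, Finset.mem_singleton, Finset.mem_erase]; grind

theorem symmDiff_single_notMem {α : Type*} [DecidableEq α] {U : Finset α} {i : α} (h : i ∉ U) :
    symmDiff U {i} = insert i U := by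
  ext x; simp only [Finset.mem_symmDiff, Finset.mem_singleton, Finset.mem_insert]; grind

/-- the terms of the Wick relation -/
noncomputable def wickTerm {k n : ℕ} (C : Matrix (Fin k) (Fin n) ℝ)
    (U V : Finset (Fin n)) (i : Fin n) : ℝ :=
  (-1)^((symmDiff U V).filter (· < i)).card *
      (colDet C (symmDiff U {i}) * colDet C (symmDiff V {i}))

theorem wickTerm_comm {k n : ℕ} (C : Matrix (Fin k) (Fin n) ℝ)
    (U V : Finset (Fin n)) (i : Fin n) : wickTerm C U V i = wickTerm C V U i := by
  unfold wickTerm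
  rw [symmDiff_comm, mul_comm (colDet _ _)]

theorem wick_aux {k n : ℕ} (C : Matrix (Fin k) (Fin n) ℝ)
    (U V : Finset (Fin n)) (hU : U.card = k+1) (hV : V.card + 1 = k) :
    ∑ i ∈ symmDiff U V, wickTerm C U V i = 0 := by
  have h := plucker_fin C U V hU hV
  have h2 : ∑ i ∈ U, (-1)^(U.filter (· < i)).card * colDet C (U.erase i) *
      ((-1)^(V.filter (· < i)).card * colDet C (insert i V)) = 0 := by
    rw [sum_emb U hU, ← h]
    simp only [emb_count]
  have h3 : ∑ i ∈ U \ V, wickTerm C U V i = ∑ i ∈ symmDiff U V, wickTerm C U V i := by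
    apply Finset.sum_subset
    · intro x; simp only [Finset.mem_symmDiff, Finset.mem_sdiff]; tauto
    · intro x hx hx'
      have : x ∉ U := by
        simp only [Finset.mem_symmDiff, Finset.mem_sdiff] at hx hx'; tauto
      unfold wickTerm
      rw [symmDiff_single_notMem this, colDet_ne C (insert x U)]
      · ring
      · rw [Finset.card_insert_of_notMem this]; omega
  rw [← h3, ← h2]
  rw [← Finset.sum_subset (Finset.sdiff_subset (s := U) (t := V))]
  · refine Finset.sum_congr rfl fun i hi => ?_
    rw [Finset.mem_sdiff] at hi
    unfold wickTerm
    rw [symmDiff_single_mem hi.1, symmDiff_single_notMem hi.2, filter_parity]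
    ring
  · intro x hx hx'
    have : x ∈ V := by
      simp only [Finset.mem_sdiff] at hx'; tauto
    rw [Finset.insert_eq_of_mem this, colDet_ne C V (by omega)]
    ring

theorem wick_s16 {k n : ℕ} (C : Matrix (Fin k) (Fin n) ℝ) (U V : Finset (Fin n)) :
    ∑ i ∈ symmDiff U V, wickTerm C U V i = 0 := by
  by_cases h1 : U.card = k+1 ∧ V.card + 1 = k
  · exact wick_aux C U V h1.1 h1.2
  by_cases h2 : V.card = k+1 ∧ U.card + 1 = k
  · rw [symmDiff_comm]
    simp only [wickTerm_comm C U V]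
    exact wick_aux C V U h2.1 h2.2
  refine Finset.sum_eq_zero fun i hi => ?_
  unfold wickTerm
  rw [Finset.mem_symmDiff] at hi
  rcases hi with ⟨ha, hb⟩ | ⟨ha, hb⟩
  · rw [symmDiff_single_mem ha, symmDiff_single_notMem hb]
    have e1 := Finset.card_erase_add_one ha
    have e2 := Finset.card_insert_of_notMem hb
    by_cases h : (U.erase i).card = k
    · rw [colDet_ne C (insert i V) (by omega)]; ring
    · rw [colDet_ne C _ h]; ring
  · rw [symmDiff_single_mem ha, symmDiff_single_notMem hb]
    have e1 := Finset.card_erase_add_one ha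
    have e2 := Finset.card_insert_of_notMem hb
    by_cases h : (V.erase i).card = k
    · rw [colDet_ne C (insert i U) (by omega)]; ring
    · rw [colDet_ne C _ h]; ring

theorem pfMinor_eq {n m : ℕ} (A : Matrix (Fin n) (Fin n) ℝ) (S : Finset (Fin n))
    (h : S.card = m) :
    pfMinor A S = pfaffian (Matrix.of fun p q : Fin m =>
      A (S.orderEmbOfFin h p) (S.orderEmbOfFin h q)) := by
  subst h
  rfl

theorem pfMinor_succ {n M : ℕ} (A : Matrix (Fin n) (Fin n) ℝ) (X : Finset (Fin n))
    (h : X.card = M+2) :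
    pfMinor A X = ∑ j : Fin (M+1), (-1)^(j:ℕ) *
      A (X.orderEmbOfFin h 0) (X.orderEmbOfFin h j.succ) *
      pfMinor A ((X.erase (X.orderEmbOfFin h 0)).erase (X.orderEmbOfFin h j.succ)) := by
  rw [pfMinor_eq A X h, pfaffian_succ]
  refine Finset.sum_congr rfl fun j _ => ?_
  have h1 : (X.erase (X.orderEmbOfFin h 0)).card = M + 1 := by
    rw [Finset.card_erase_of_mem (by simp), h]; rfl
  have e1 := emb_erase X h 0 h1
  have e1' : (X.erase (X.orderEmbOfFin h 0)).orderEmbOfFin h1 j = X.orderEmbOfFin h j.succ := by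
    rw [e1]; simp
  have h2 : ((X.erase (X.orderEmbOfFin h 0)).erase
      ((X.erase (X.orderEmbOfFin h 0)).orderEmbOfFin h1 j)).card = M := by
    rw [Finset.card_erase_of_mem (by simp), h1]; rfl
  have e2 := emb_erase _ h1 j h2
  rw [← e1', pfMinor_eq _ _ h2, e2, e1]
  simp

theorem main_formula {k n : ℕ}
    (C : Matrix (Fin k) (Fin n) ℝ)
    (T : Finset (Fin n)) (hT : colDet C T ≠ 0)
    (A : Matrix (Fin n) (Fin n) ℝ)
    (hA : ∀ i j : Fin n, i < j → A i j = colDet C (symmDiff T {i, j}) / colDet C T) :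
    ∀ (m : ℕ) (S : Finset (Fin n)), (symmDiff S T).card = m →
      pfMinor A (symmDiff S T) = colDet C S / colDet C T := by
  have hTk : T.card = k := by
    by_contra h; exact hT (colDet_ne C T h)
  intro m
  induction m using Nat.strong_induction_on with
  | _ m ih =>
  intro S hS
  match m, hS, ih with
  | 0, hS, _ =>
    have : S = T := by simpa using hS
    subst this
    rw [div_self hT, pfMinor_eq _ _ hS]
    simp [pfaffian]
  | 1, hS, _ =>
    obtain ⟨t, ht⟩ := card_symmDiff_parity S T
    rw [colDet_ne C S (by omega), pfMinor_eq _ _ hS]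
    simp [pfaffian]
  | M+2, hS, ih =>
    set X := symmDiff S T with hX
    set x := X.orderEmbOfFin hS with hx
    have hUV : symmDiff (symmDiff S {x 0}) (symmDiff T {x 0}) = X := by
      rw [symmDiff_symmDiff_symmDiff_comm, symmDiff_self, symmDiff_bot]
    have hw := wick_s16 C (symmDiff S {x 0}) (symmDiff T {x 0})
    rw [hUV, sum_emb X hS] at hw
    have hterm : ∀ j, wickTerm C (symmDiff S {x 0}) (symmDiff T {x 0}) (x j) =
        (-1)^(j:ℕ) * (colDet C (symmDiff (symmDiff S {x 0}) {x j}) *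
          colDet C (symmDiff (symmDiff T {x 0}) {x j})) := by
      intro j
      unfold wickTerm
      rw [hUV, hx, emb_count]
    simp only [← hx, hterm] at hw
    rw [Fin.sum_univ_succ, symmDiff_symmDiff_cancel_right, symmDiff_symmDiff_cancel_right] at hw
    rw [pfMinor_succ A X hS, eq_div_iff hT]
    have key : ∀ j : Fin (M+1), (-1)^(j:ℕ) * A (x 0) (x j.succ) *
        pfMinor A ((X.erase (x 0)).erase (x j.succ)) =
        - ((-1)^((j.succ : Fin (M+2)):ℕ) * (colDet C (symmDiff (symmDiff S {x 0}) {x j.succ}) *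
          colDet C (symmDiff (symmDiff T {x 0}) {x j.succ}))) / (colDet C T * colDet C T) := by
      intro j
      have hlt : x 0 < x j.succ := by simp [hx]
      have m0 : x 0 ∈ X := by simp [hx]
      have m1 : x j.succ ∈ X.erase (x 0) := by
        rw [Finset.mem_erase]; exact ⟨hlt.ne', by simp [hx]⟩
      have hE : (X.erase (x 0)).erase (x j.succ) =
          symmDiff (symmDiff (symmDiff S {x 0}) {x j.succ}) T := by
        rw [← symmDiff_single_mem m1, ← symmDiff_single_mem m0, hX]
        rw [symmDiff_right_comm S T, symmDiff_right_comm _ T]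
      have hcard : ((X.erase (x 0)).erase (x j.succ)).card = M := by
        rw [Finset.card_erase_of_mem m1, Finset.card_erase_of_mem m0, hS]; rfl
      have hp : ({x 0, x j.succ} : Finset (Fin n)) = symmDiff {x 0} {x j.succ} := by
        rw [symmDiff_single_notMem (by simpa using hlt.ne'), Finset.pair_comm]
      rw [hE] at hcard ⊢
      rw [ih M (by omega) _ hcard, hA _ _ hlt, hp, ← symmDiff_assoc, Fin.val_succ, pow_succ]
      field_simp
    simp only [← hx, key]
    rw [← Finset.sum_div, Finset.sum_neg_distrib, ← eq_neg_of_add_eq_zero_left hw]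
    simp
    field_simp

/-- Let `C` be a real `k × n` matrix of rank `k` representing an oriented matroid,
and let `T` be a basis (a `k`-set of columns with `det(T) ≠ 0`).  Define the
`n × n` matrix `A` by `a_{ij} = det(T Δ {i,j})/det(T)`, where `det(S)` is the
determinant of the columns of `C` indexed by `S` when `|S| = k` and `0` otherwise
(with the sign convention `a_{ji} = −a_{ij}`, `a_{ii} = 0`, the columns of each
`k`-set being taken in increasing order).  Then `A` is skew-symmetric, and the map
`S ↦ sign Pf(A_{S Δ T})` agrees up to a single global sign with the map assigning
to each `k`-set `S` the sign of the corresponding minor of `C` (extended by zero to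
sets of other cardinalities). -/
theorem orientedMatroid_to_orientedDeltaMatroid_rep {k n : ℕ}
    (C : Matrix (Fin k) (Fin n) ℝ) (hC : C.rank = k)
    (T : Finset (Fin n)) (hT : colDet C T ≠ 0)
    (A : Matrix (Fin n) (Fin n) ℝ)
    (hA : ∀ i j : Fin n, A i j =
      if i = j then 0
      else if i < j then colDet C (symmDiff T {i, j}) / colDet C T
      else -(colDet C (symmDiff T {i, j}) / colDet C T)) :
    A.transpose = -A ∧
    ∃ c : SignType, (c = 1 ∨ c = -1) ∧
      ∀ S : Finset (Fin n),
        SignType.sign (pfMinor A (symmDiff S T)) = c * SignType.sign (colDet C S) := by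
  have hlt : ∀ i j : Fin n, i < j → A i j = colDet C (symmDiff T {i, j}) / colDet C T := by
    intro i j hij
    rw [hA, if_neg hij.ne, if_pos hij]
  refine ⟨?_, SignType.sign (colDet C T), ?_, ?_⟩
  · ext i j
    rw [Matrix.transpose_apply, Matrix.neg_apply, hA j i, hA i j, Finset.pair_comm j i]
    rcases lt_trichotomy i j with h | h | h
    · rw [if_neg h.ne', if_neg h.not_gt, if_neg h.ne, if_pos h]
    · simp [h]
    · rw [if_neg h.ne, if_pos h, if_neg h.ne', if_neg h.not_gt, neg_neg]
  · rcases lt_or_gt_of_ne hT with h | h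
    · right; exact sign_neg h
    · left; exact sign_pos h
  · intro S
    rw [main_formula C T hT A hlt _ S rfl]
    rcases lt_or_gt_of_ne hT with h | h
    · rw [div_eq_mul_inv, sign_mul, sign_neg h, sign_neg (inv_lt_zero.2 h), mul_comm]
    · rw [div_eq_mul_inv, sign_mul, sign_pos h, sign_pos (inv_pos.2 h), mul_comm]
end
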